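/- Assume the loss has the form ℓ(w,x,y) = ℓ(f_w(x),y) with values in [0,1]. Then the subtask generalization error satisfies |gen_{Q,E_Q}| ≤ E_{Y'~Q_Y}[E_{Z_{[2n]}}[(1/n^{Y'}) Σ_{i=1}^n sqrt(2·max(𝟙{Y_i^-=Y'}, 𝟙{Y_i^+=Y'})·I_{Z_{[2n]}}(f_W(X_i^±);U_i))]]. -/

import Mathlib

open MeasureTheory ProbabilityTheory
open scoped ENNReal

noncomputable section

open Classical in
/-- Kullback–Leibler divergence: `∞` unless `μ ≪ ν` and the log-likelihood ratio is
`μ`-integrable. -/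
def KL {α : Type*} [MeasurableSpace α] (μ ν : Measure α) : ℝ≥0∞ :=
  if μ ≪ ν ∧ Integrable (llr μ ν) μ then ENNReal.ofReal (∫ x, llr μ ν x ∂μ) else ∞

/-- Fair coin measure on `Bool` (the law of a uniform `{−1,+1}` selector, `true ↔ +1`). -/
def coin : Measure Bool :=
  (2 : ℝ≥0∞)⁻¹ • Measure.dirac true + (2 : ℝ≥0∞)⁻¹ • Measure.dirac false

/-- Disintegrated conditional mutual information `I_z(A;B)` given `Z = z`, defined through
regular conditional distributions: `KL(P_{A,B|Z=z} ‖ P_{A|Z=z} ⊗ P_{B|Z=z})`. -/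
def dCMI {Ω γ α β : Type*} [MeasurableSpace Ω] [MeasurableSpace γ]
    [MeasurableSpace α] [StandardBorelSpace α] [Nonempty α]
    [MeasurableSpace β] [StandardBorelSpace β] [Nonempty β]
    (μ : Measure Ω) [IsFiniteMeasure μ]
    (A : Ω → α) (B : Ω → β) (Z : Ω → γ) (z : γ) : ℝ≥0∞ :=
  KL (condDistrib (fun ω => (A ω, B ω)) Z μ z)
    ((condDistrib A Z μ z).prod (condDistrib B Z μ z))

/-- The super-sample entry selected by `u`, i.e. `z^{u}` (the training sample):
`zz = (z⁻, z⁺)` and `u = true` means `+1`. -/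
def trainSel {𝒵 : Type*} (zz : 𝒵 × 𝒵) (u : Bool) : 𝒵 := if u then zz.2 else zz.1

/-- The super-sample entry not selected by `u`, i.e. `z^{−u}` (the test sample). -/
def testSel {𝒵 : Type*} (zz : 𝒵 × 𝒵) (u : Bool) : 𝒵 := if u then zz.1 else zz.2

/-!
Write `σ u = ±1` for the selector bit. Given the super-sample `z`, the test-minus-training loss on
the class `y` of the `i`-th pair is `g z a * σ u`, where `a` is the pair of predictions and `g z a`
the loss difference of the two entries, bounded by the indicator that one of them has label `y`.
If `a` and `u` were independent given `z`, this product would be centred and hence sub-Gaussian by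
Hoeffding's lemma; the Donsker–Varadhan inequality turns this into the bound `√(2 I_z)` on its mean
under the true conditional law. Averaging over `z`, `i` and `y` gives the theorem.
-/

open InformationTheory
open scoped NNReal

section DonskerVaradhan

variable {α : Type*} [MeasurableSpace α] {μ ν : Measure α} {X : α → ℝ}

lemma KL_eq_klDiv (h : μ .univ = ν .univ) : KL μ ν = klDiv μ ν := by
  rw [KL, klDiv]
  simp [measureReal_def, h]

lemma mul_integral_le_toReal_klDiv_add_cgf [IsProbabilityMeasure μ] [IsProbabilityMeasure ν]
    (hKL : klDiv μ ν ≠ ∞) {t : ℝ} (hμ : Integrable X μ)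
    (hν : Integrable (fun a => Real.exp (t * X a)) ν) :
    t * ∫ a, X a ∂μ ≤ (klDiv μ ν).toReal + cgf X ν t := by
  obtain ⟨hac, hllr⟩ := klDiv_ne_top_iff.1 hKL
  have := isProbabilityMeasure_tilted hν
  have h_gibbs : 0 ≤ ∫ a, llr μ (ν.tilted fun a => t * X a) a ∂μ := by
    simpa using integral_llr_add_sub_measure_univ_nonneg
      (hac.trans (absolutelyContinuous_tilted hν))
      (integrable_llr_tilted_right hac (hμ.const_mul t) hllr hν)
  rw [integral_llr_tilted_right hac (hμ.const_mul t) hν hllr, integral_const_mul] at h_gibbs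
  rw [toReal_klDiv_of_measure_eq hac (by simp), cgf, mgf]
  linarith

lemma abs_integral_le_sqrt_klDiv_of_hasSubgaussianMGF [IsProbabilityMeasure μ]
    [IsProbabilityMeasure ν] (hKL : klDiv μ ν ≠ ∞) {c : ℝ≥0} (hμ : Integrable X μ)
    (hν : HasSubgaussianMGF X c ν) :
    |∫ a, X a ∂μ| ≤ √(2 * c * (klDiv μ ν).toReal) := by
  have h_quadratic (t : ℝ) :
      0 ≤ (c / 2 : ℝ) * (t * t) + (-∫ a, X a ∂μ) * t + (klDiv μ ν).toReal := by
    linarith [mul_integral_le_toReal_klDiv_add_cgf hKL hμ (hν.integrable_exp_mul t),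
      hν.cgf_le t]
  have h_discrim := discrim_le_zero h_quadratic
  rw [discrim] at h_discrim
  exact Real.abs_le_sqrt (by linarith)

end DonskerVaradhan

section Selector

/-- The `±1` value of a selector bit, `true ↔ +1`. -/
def selectorSign (u : Bool) : ℝ := if u then 1 else -1

@[fun_prop]
lemma measurable_selectorSign : Measurable selectorSign := measurable_of_finite _

lemma abs_selectorSign (u : Bool) : |selectorSign u| = 1 := by
  cases u <;> simp [selectorSign]

instance isProbabilityMeasure_coin : IsProbabilityMeasure coin :=
  ⟨by simp [coin, ENNReal.inv_two_add_inv_two]⟩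

lemma integral_selectorSign_coin : ∫ u, selectorSign u ∂coin = 0 := by
  have h_int (b : Bool) : Integrable selectorSign ((2 : ℝ≥0∞)⁻¹ • Measure.dirac b) :=
    Integrable.of_finite.smul_measure (by simp)
  rw [coin, integral_add_measure (h_int _) (h_int _)]
  simp [selectorSign]

lemma apply_testSel_sub_apply_trainSel {𝒵 : Type*} (φ : 𝒵 → ℝ) (zz : 𝒵 × 𝒵) (u : Bool) :
    φ (testSel zz u) - φ (trainSel zz u) = (φ zz.1 - φ zz.2) * selectorSign u := by
  cases u <;> simp [testSel, trainSel, selectorSign]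

variable {α : Type*} {g : α → ℝ} {C : ℝ≥0}

lemma abs_mul_selectorSign_le (hgC : ∀ a, |g a| ≤ C) (p : α × Bool) :
    |g p.1 * selectorSign p.2| ≤ C := by
  rw [abs_mul, abs_selectorSign, mul_one]
  exact hgC p.1

variable [MeasurableSpace α]

lemma hasSubgaussianMGF_mul_selectorSign (ν : Measure α) [IsProbabilityMeasure ν]
    (hg : Measurable g) (hgC : ∀ a, |g a| ≤ C) :
    HasSubgaussianMGF (fun p : α × Bool => g p.1 * selectorSign p.2) (C ^ 2) (ν.prod coin) := by
  have h_mean : ∫ p, g p.1 * selectorSign p.2 ∂(ν.prod coin) = 0 := by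
    rw [integral_prod_mul, integral_selectorSign_coin, mul_zero]
  have h_hoeffding := hasSubgaussianMGF_of_mem_Icc_of_integral_eq_zero (by fun_prop)
    (ae_of_all _ fun p => abs_le.1 (abs_mul_selectorSign_le hgC p)) h_mean
  have h_param : (‖(C : ℝ) - -C‖₊ / 2) ^ 2 = C ^ 2 := by
    ext
    simp [← two_mul]
  rwa [h_param] at h_hoeffding

lemma enorm_integral_mul_selectorSign_le (P : Measure (α × Bool)) [IsProbabilityMeasure P]
    (ν : Measure α) [IsProbabilityMeasure ν] (hg : Measurable g) (hgC : ∀ a, |g a| ≤ C) :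
    ‖∫ p, g p.1 * selectorSign p.2 ∂P‖ₑ ≤ (2 * C ^ 2 * KL P (ν.prod coin)) ^ (1 / 2 : ℝ) := by
  rw [KL_eq_klDiv (by simp)]
  rcases eq_or_ne C 0 with rfl | hC
  · have hg0 (a : α) : g a = 0 := by simpa using hgC a
    simp [hg0]
  rcases eq_or_ne (klDiv P (ν.prod coin)) ∞ with hKL | hKL
  · simp [hKL, hC, ENNReal.mul_top]
  have h_int : Integrable (fun p : α × Bool => g p.1 * selectorSign p.2) P :=
    .of_bound (by fun_prop) C (ae_of_all _ (abs_mul_selectorSign_le hgC))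
  have h_sqrt := abs_integral_le_sqrt_klDiv_of_hasSubgaussianMGF hKL h_int
    (hasSubgaussianMGF_mul_selectorSign ν hg hgC)
  calc ‖∫ p, g p.1 * selectorSign p.2 ∂P‖ₑ
      ≤ ENNReal.ofReal √(2 * (C ^ 2 : ℝ≥0) * (klDiv P (ν.prod coin)).toReal) := by
        rw [Real.enorm_eq_ofReal_abs]
        exact ENNReal.ofReal_le_ofReal h_sqrt
    _ = (2 * C ^ 2 * klDiv P (ν.prod coin)) ^ (1 / 2 : ℝ) := by
        rw [Real.sqrt_eq_rpow, ← ENNReal.ofReal_rpow_of_nonneg (by positivity) (by norm_num),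
          ENNReal.ofReal_mul (by positivity), ENNReal.ofReal_mul (by positivity),
          ENNReal.ofReal_toReal hKL]
        simp

end Selector

section ProductLaw

variable {Ω γ ι : Type*} [MeasurableSpace Ω] [MeasurableSpace γ] [Fintype ι]
  {𝒰 : ι → Type*} [∀ i, MeasurableSpace (𝒰 i)] {μ : Measure Ω} {Z : Ω → γ} {U : Ω → ∀ i, 𝒰 i}
  {ν : Measure γ} [IsProbabilityMeasure ν]
  {ρ : ∀ i, Measure (𝒰 i)} [∀ i, IsProbabilityMeasure (ρ i)]

lemma hasLaw_apply_of_hasLaw_prod_pi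
    (h : HasLaw (fun ω => (Z ω, U ω)) (ν.prod (Measure.pi ρ)) μ) (i : ι) :
    HasLaw (fun ω => U ω i) (ρ i) μ :=
  (measurePreserving_eval ρ i).hasLaw.comp (measurePreserving_snd.hasLaw.comp h)

lemma indepFun_apply_of_hasLaw_prod_pi [IsFiniteMeasure μ]
    (h : HasLaw (fun ω => (Z ω, U ω)) (ν.prod (Measure.pi ρ)) μ) (i : ι) :
    Z ⟂ᵢ[μ] fun ω => U ω i :=
  have h_indep : Z ⟂ᵢ[μ] U := (indepFun_iff_hasLaw_prodMk_prod
    (measurePreserving_fst.hasLaw.comp h) (measurePreserving_snd.hasLaw.comp h)).2 h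
  h_indep.comp measurable_id (measurable_pi_apply i)

end ProductLaw

section Conditioning

variable {Ω γ β : Type*} [MeasurableSpace Ω] [MeasurableSpace γ]
  [MeasurableSpace β] [StandardBorelSpace β] [Nonempty β]
  {μ : Measure Ω} {Z : Ω → γ}

lemma condDistrib_ae_eq_of_indepFun [IsFiniteMeasure μ] {B : Ω → β} {ρ : Measure β}
    [IsFiniteMeasure ρ] (hZ : AEMeasurable Z μ) (hB : HasLaw B ρ μ) (hZB : Z ⟂ᵢ[μ] B) :
    ∀ᵐ z ∂(μ.map Z), condDistrib B Z μ z = ρ := by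
  have h_disint : μ.map (fun ω => (Z ω, B ω)) = μ.map Z ⊗ₘ Kernel.const γ ρ := by
    rw [hZB.map_prod_eq_prod_map_map hZ hB.aemeasurable, hB.map_eq, Measure.compProd_const]
  filter_upwards [condDistrib_ae_eq_of_measure_eq_compProd Z hB.aemeasurable h_disint] with z hz
  rw [hz, Kernel.const_apply]

lemma enorm_integral_le_lintegral_enorm_integral_condDistrib [IsFiniteMeasure μ]
    {E : Type*} [NormedAddCommGroup E] [NormedSpace ℝ E] {B : Ω → β} {F : γ × β → E}
    (hZ : AEMeasurable Z μ) (hB : AEMeasurable B μ)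
    (hF : Integrable F (μ.map fun ω => (Z ω, B ω))) :
    ‖∫ ω, F (Z ω, B ω) ∂μ‖ₑ ≤ ∫⁻ z, ‖∫ b, F (z, b) ∂(condDistrib B Z μ z)‖ₑ ∂(μ.map Z) := by
  have h_disint := compProd_map_condDistrib (mβ := inferInstance) (X := Z) hB
  rw [← integral_map (hZ.prodMk hB) hF.aestronglyMeasurable, ← h_disint,
    Measure.integral_compProd (by rwa [h_disint])]
  exact enorm_integral_le_lintegral_enorm _

lemma enorm_integral_mul_selectorSign_le_lintegral_dCMI [IsProbabilityMeasure μ]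
    {A : Ω → β} {B : Ω → Bool} {g : γ → β → ℝ} {C : γ → ℝ≥0}
    (hZ : AEMeasurable Z μ) (hA : AEMeasurable A μ) (hB : HasLaw B coin μ) (hZB : Z ⟂ᵢ[μ] B)
    (hg : Measurable (Function.uncurry g)) (hgC : ∀ z a, |g z a| ≤ C z)
    (h_int : Integrable (fun ω => g (Z ω) (A ω) * selectorSign (B ω)) μ) :
    ‖∫ ω, g (Z ω) (A ω) * selectorSign (B ω) ∂μ‖ₑ
      ≤ ∫⁻ z, (2 * C z ^ 2 * dCMI μ A B Z z) ^ (1 / 2 : ℝ) ∂(μ.map Z) := by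
  let F : γ × (β × Bool) → ℝ := fun p => g p.1 p.2.1 * selectorSign p.2.2
  have hAB : AEMeasurable (fun ω => (A ω, B ω)) μ := hA.prodMk hB.aemeasurable
  have hF : Measurable F :=
    (hg.comp (measurable_fst.prodMk measurable_snd.fst)).mul (by fun_prop)
  have hF_int : Integrable F (μ.map fun ω => (Z ω, (A ω, B ω))) :=
    (integrable_map_measure hF.aestronglyMeasurable (hZ.prodMk hAB)).2 h_int
  refine (enorm_integral_le_lintegral_enorm_integral_condDistrib hZ hAB hF_int).trans
    (lintegral_mono_ae ?_)
  filter_upwards [condDistrib_ae_eq_of_indepFun hZ hB hZB] with z hz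
  rw [dCMI, hz]
  exact enorm_integral_mul_selectorSign_le _ _ hg.of_uncurry_left (hgC z)

end Conditioning

section ClassLoss

variable {Ω 𝒲 𝒳 𝒴 Yhat : Type*} [DecidableEq 𝒴]

/-- The loss restricted to the class `y`, i.e. `𝟙{y' = y} ℓ(p, y')`. -/
def classLoss (ℓ : Yhat → 𝒴 → ℝ) (y : 𝒴) (p : Yhat) (y' : 𝒴) : ℝ := if y' = y then ℓ p y' else 0

/-- The loss on the class `y` of the predictor `h`, at the test entry minus at the training entry
of the super-sample pair `zz` with selector `u`. -/
def classGap (ℓ : Yhat → 𝒴 → ℝ) (y : 𝒴) (h : 𝒳 → Yhat) (zz : (𝒳 × 𝒴) × (𝒳 × 𝒴)) (u : Bool) : ℝ :=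
  classLoss ℓ y (h (testSel zz u).1) (testSel zz u).2 -
    classLoss ℓ y (h (trainSel zz u).1) (trainSel zz u).2

variable {ℓ : Yhat → 𝒴 → ℝ}

lemma classGap_eq_sub_mul_selectorSign (y : 𝒴) (h : 𝒳 → Yhat) (zz : (𝒳 × 𝒴) × (𝒳 × 𝒴))
    (u : Bool) :
    classGap ℓ y h zz u =
      (classLoss ℓ y (h zz.1.1) zz.1.2 - classLoss ℓ y (h zz.2.1) zz.2.2) * selectorSign u :=
  apply_testSel_sub_apply_trainSel (fun z : 𝒳 × 𝒴 => classLoss ℓ y (h z.1) z.2) zz u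

lemma classLoss_mem_Icc (hℓ01 : ∀ p y', ℓ p y' ∈ Set.Icc (0 : ℝ) 1) (y : 𝒴) (p : Yhat) (y' : 𝒴) :
    classLoss ℓ y p y' ∈ Set.Icc 0 ((if y' = y then 1 else 0 : ℝ≥0) : ℝ) := by
  unfold classLoss
  split_ifs
  · exact hℓ01 p y'
  · simp

lemma abs_classLoss_sub_classLoss_le (hℓ01 : ∀ p y', ℓ p y' ∈ Set.Icc (0 : ℝ) 1)
    (y y₁ y₂ : 𝒴) (p₁ p₂ : Yhat) :
    |classLoss ℓ y p₁ y₁ - classLoss ℓ y p₂ y₂| ≤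
      (max (if y₁ = y then 1 else 0) (if y₂ = y then 1 else 0) : ℝ≥0) := by
  obtain ⟨h₁_nonneg, h₁_le⟩ := classLoss_mem_Icc hℓ01 y p₁ y₁
  obtain ⟨h₂_nonneg, h₂_le⟩ := classLoss_mem_Icc hℓ01 y p₂ y₂
  rw [NNReal.coe_max]
  exact abs_sub_le_of_nonneg_of_le h₁_nonneg (h₁_le.trans (le_max_left _ _))
    h₂_nonneg (h₂_le.trans (le_max_right _ _))

lemma abs_classGap_le_one (hℓ01 : ∀ p y', ℓ p y' ∈ Set.Icc (0 : ℝ) 1) (y : 𝒴) (h : 𝒳 → Yhat)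
    (zz : (𝒳 × 𝒴) × (𝒳 × 𝒴)) (u : Bool) : |classGap ℓ y h zz u| ≤ 1 := by
  rw [classGap_eq_sub_mul_selectorSign, abs_mul, abs_selectorSign, mul_one]
  refine (abs_classLoss_sub_classLoss_le hℓ01 y _ _ _ _).trans ?_
  split_ifs <;> simp

variable [MeasurableSpace 𝒴] [MeasurableSingletonClass 𝒴] [MeasurableSpace Yhat]

lemma measurable_classLoss (hℓ : Measurable fun p : Yhat × 𝒴 => ℓ p.1 p.2) (y : 𝒴) :
    Measurable fun p : Yhat × 𝒴 => classLoss ℓ y p.1 p.2 :=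
  .ite (measurable_snd (measurableSet_singleton y)) hℓ measurable_const

variable [MeasurableSpace Ω] [MeasurableSpace 𝒲] [MeasurableSpace 𝒳] {γ : Type*}
  [MeasurableSpace γ] {μ : Measure Ω} {B : Ω → Bool} {W : Ω → 𝒲} {f : 𝒲 → 𝒳 → Yhat}

lemma integrable_classGap [IsFiniteMeasure μ] {T : Ω → (𝒳 × 𝒴) × (𝒳 × 𝒴)}
    (hT : AEMeasurable T μ) (hB : AEMeasurable B μ)
    (hW : AEMeasurable W μ) (hf : Measurable fun p : 𝒲 × 𝒳 => f p.1 p.2)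
    (hℓ : Measurable fun p : Yhat × 𝒴 => ℓ p.1 p.2)
    (hℓ01 : ∀ p y', ℓ p y' ∈ Set.Icc (0 : ℝ) 1) (y : 𝒴) :
    Integrable (fun ω => classGap ℓ y (f (W ω)) (T ω) (B ω)) μ := by
  have h_entry : Measurable fun q : 𝒲 × 𝒳 × 𝒴 => classLoss ℓ y (f q.1 q.2.1) q.2.2 :=
    (measurable_classLoss hℓ y).comp
      ((hf.comp (measurable_fst.prodMk measurable_snd.fst)).prodMk measurable_snd.snd)
  refine .of_bound (AEMeasurable.aestronglyMeasurable ?_) 1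
    (ae_of_all _ fun ω => abs_classGap_le_one hℓ01 y (f (W ω)) (T ω) (B ω))
  simp only [classGap_eq_sub_mul_selectorSign]
  exact ((h_entry.comp_aemeasurable (hW.prodMk hT.fst)).sub
    (h_entry.comp_aemeasurable (hW.prodMk hT.snd))).mul
    (measurable_selectorSign.comp_aemeasurable hB)

lemma enorm_integral_classGap_le [IsProbabilityMeasure μ] [StandardBorelSpace Yhat]
    [Nonempty Yhat] {Z : Ω → γ} {S : γ → (𝒳 × 𝒴) × (𝒳 × 𝒴)}
    (hZ : AEMeasurable Z μ) (hS : Measurable S) (hB : HasLaw B coin μ) (hZB : Z ⟂ᵢ[μ] B)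
    (hW : AEMeasurable W μ) (hf : Measurable fun p : 𝒲 × 𝒳 => f p.1 p.2)
    (hℓ : Measurable fun p : Yhat × 𝒴 => ℓ p.1 p.2)
    (hℓ01 : ∀ p y', ℓ p y' ∈ Set.Icc (0 : ℝ) 1) (y : 𝒴) :
    ‖∫ ω, classGap ℓ y (f (W ω)) (S (Z ω)) (B ω) ∂μ‖ₑ ≤
      ∫⁻ z, (2 * max (if (S z).1.2 = y then (1 : ℝ≥0∞) else 0)
                     (if (S z).2.2 = y then (1 : ℝ≥0∞) else 0) *
        dCMI μ (fun ω => (f (W ω) (S (Z ω)).1.1, f (W ω) (S (Z ω)).2.1)) B Z z) ^ (1 / 2 : ℝ)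
        ∂(μ.map Z) := by
  let g : γ → Yhat × Yhat → ℝ := fun z a =>
    classLoss ℓ y a.1 (S z).1.2 - classLoss ℓ y a.2 (S z).2.2
  let C : γ → ℝ≥0 := fun z =>
    max (if (S z).1.2 = y then 1 else 0) (if (S z).2.2 = y then 1 else 0)
  have h_loss := measurable_classLoss hℓ y
  have hg : Measurable (Function.uncurry g) :=
    (h_loss.comp (by fun_prop : Measurable fun p : γ × Yhat × Yhat => (p.2.1, (S p.1).1.2))).sub
      (h_loss.comp (by fun_prop : Measurable fun p : γ × Yhat × Yhat => (p.2.2, (S p.1).2.2)))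
  have hgC (z : γ) (a : Yhat × Yhat) : |g z a| ≤ C z :=
    abs_classLoss_sub_classLoss_le hℓ01 y _ _ _ _
  have hT : AEMeasurable (fun ω => S (Z ω)) μ := hS.comp_aemeasurable hZ
  have h_pred : AEMeasurable (fun ω => (f (W ω) (S (Z ω)).1.1, f (W ω) (S (Z ω)).2.1)) μ :=
    (hf.comp_aemeasurable (hW.prodMk hT.fst.fst)).prodMk
      (hf.comp_aemeasurable (hW.prodMk hT.snd.fst))
  have h_int := integrable_classGap hT hB.aemeasurable hW hf hℓ hℓ01 y
  simp only [classGap_eq_sub_mul_selectorSign] at h_int ⊢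
  have hC (z : γ) : (C z : ℝ≥0∞) ^ 2 = max (if (S z).1.2 = y then 1 else 0)
      (if (S z).2.2 = y then 1 else 0) := by
    simp only [C]
    split_ifs <;> simp
  simpa only [hC] using
    enorm_integral_mul_selectorSign_le_lintegral_dCMI hZ h_pred hB hZB hg hgC h_int

end ClassLoss

section Subtask

-- Only an inequality: the lower integral is merely superadditive on non-measurable functions.
lemma sum_lintegral_le_lintegral_sum {α ι : Type*} [MeasurableSpace α] (μ : Measure α)
    (s : Finset ι) (f : ι → α → ℝ≥0∞) :
    ∑ i ∈ s, ∫⁻ a, f i a ∂μ ≤ ∫⁻ a, ∑ i ∈ s, f i a ∂μ := by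
  classical
  induction s using Finset.induction_on with
  | empty => simp
  | insert i s hi ih =>
    simp only [Finset.sum_insert hi]
    exact (add_le_add_right ih _).trans (le_lintegral_add _ _)

/-- `Q` is the paper's `Q_Y`, and `c y` its `1 / n^y`. -/
theorem subtask_fCMI_bound_general
    {Ω 𝒲 𝒳 𝒴 Yhat ι : Type*} [MeasurableSpace Ω] [MeasurableSpace 𝒲] [MeasurableSpace 𝒳]
    [MeasurableSpace 𝒴] [MeasurableSingletonClass 𝒴] [DecidableEq 𝒴]
    [MeasurableSpace Yhat] [StandardBorelSpace Yhat] [Nonempty Yhat] [Fintype ι]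
    {μ : Measure Ω} [IsProbabilityMeasure μ]
    {Z : Ω → ι → (𝒳 × 𝒴) × (𝒳 × 𝒴)} (hZ : AEMeasurable Z μ)
    {U : Ω → ι → Bool} (hU : ∀ i, HasLaw (fun ω => U ω i) coin μ)
    (hZU : ∀ i, Z ⟂ᵢ[μ] fun ω => U ω i)
    {W : Ω → 𝒲} (hW : AEMeasurable W μ)
    {f : 𝒲 → 𝒳 → Yhat} (hf : Measurable fun p : 𝒲 × 𝒳 => f p.1 p.2)
    {ℓ : Yhat → 𝒴 → ℝ} (hℓ : Measurable fun p : Yhat × 𝒴 => ℓ p.1 p.2)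
    (hℓ01 : ∀ p y', ℓ p y' ∈ Set.Icc (0 : ℝ) 1)
    (Q : Measure 𝒴) {c : 𝒴 → ℝ} (hc : ∀ y, 0 ≤ c y) :
    ENNReal.ofReal |∫ y, (∫ ω, c y * ∑ i, classGap ℓ y (f (W ω)) (Z ω i) (U ω i) ∂μ) ∂Q|
      ≤ ∫⁻ y, (∫⁻ z, ENNReal.ofReal (c y) *
            ∑ i, (2 * max (if (z i).1.2 = y then (1 : ℝ≥0∞) else 0)
                          (if (z i).2.2 = y then (1 : ℝ≥0∞) else 0) *
                  dCMI μ (fun ω => (f (W ω) ((Z ω i).1.1), f (W ω) ((Z ω i).2.1)))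
                    (fun ω => U ω i) Z z) ^ (1 / 2 : ℝ)
            ∂(μ.map Z)) ∂Q := by
  rw [← Real.enorm_eq_ofReal_abs]
  refine (enorm_integral_le_lintegral_enorm _).trans (lintegral_mono fun y => ?_)
  refine le_trans ?_ (lintegral_const_mul_le _ _)
  have h_int (i : ι) : Integrable (fun ω => classGap ℓ y (f (W ω)) (Z ω i) (U ω i)) μ :=
    integrable_classGap (by fun_prop) (hU i).aemeasurable hW hf hℓ hℓ01 y
  rw [integral_const_mul, integral_finsetSum _ fun i _ => h_int i, enorm_mul,
    Real.enorm_of_nonneg (hc y)]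
  gcongr
  refine (enorm_sum_le _ _).trans
    ((Finset.sum_le_sum fun i _ => ?_).trans (sum_lintegral_le_lintegral_sum _ _ _))
  exact enorm_integral_classGap_le hZ (measurable_pi_apply i) (hU i) (hZU i) hW hf hℓ hℓ01 y

end Subtask

/-- **Subtask-f-CMI bound**: in the super-sample setting with predictions and a bounded loss
`ℓ(f_w(x),y) ∈ [0,1]` and target label set `A` with `P(Y ∈ A) > 0`, the subtask
generalization error `gen_{Q,E_Q} = E_{Y'∼Q_Y}[gen_{Y'}]` satisfies
`|gen_{Q,E_Q}| ≤ E_{Y'∼Q_Y}[E_{Z_{[2n]}}[(1/n^{Y'}) Σ_i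
    sqrt (2 max(𝟙{Y_i⁻=Y'},𝟙{Y_i⁺=Y'}) I_{Z_{[2n]}}(f_W(X_i^±);U_i))]]`,
where `Q_Y` is the law of the label conditioned on `{Y ∈ A}`. -/
theorem subtask_fCMI_bound
    {Ω 𝒲 𝒳 𝒴 Yhat : Type*}
    [mΩ : MeasurableSpace Ω] [StandardBorelSpace Ω] [Nonempty Ω]
    [MeasurableSpace 𝒲] [StandardBorelSpace 𝒲] [Nonempty 𝒲]
    [MeasurableSpace 𝒳] [StandardBorelSpace 𝒳]
    [MeasurableSpace 𝒴] [Countable 𝒴] [MeasurableSingletonClass 𝒴] [DecidableEq 𝒴]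
    [MeasurableSpace Yhat] [StandardBorelSpace Yhat] [Nonempty Yhat]
    (μ : Measure Ω) [IsProbabilityMeasure μ]
    (n : ℕ) (hn : 0 < n)
    (PZ : Measure (𝒳 × 𝒴)) [IsProbabilityMeasure PZ]
    (Z : Ω → Fin n → (𝒳 × 𝒴) × (𝒳 × 𝒴)) (hZ : Measurable Z)
    (U : Ω → Fin n → Bool) (hU : Measurable U)
    (W : Ω → 𝒲) (hW : Measurable W)
    (hlaw : μ.map (fun ω => (Z ω, U ω)) =
      (Measure.pi fun _ : Fin n => PZ.prod PZ).prod (Measure.pi fun _ : Fin n => coin))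
    (hSle : MeasurableSpace.comap (fun ω (i : Fin n) => trainSel (Z ω i) (U ω i))
        inferInstance ≤ mΩ)
    (hMarkov : CondIndepFun
      (MeasurableSpace.comap (fun ω (i : Fin n) => trainSel (Z ω i) (U ω i)) inferInstance)
      hSle W (fun ω => (Z ω, U ω)) μ)
    (f : 𝒲 → 𝒳 → Yhat) (hf : Measurable fun p : 𝒲 × 𝒳 => f p.1 p.2)
    (ℓ : Yhat → 𝒴 → ℝ) (hℓ : Measurable fun p : Yhat × 𝒴 => ℓ p.1 p.2)
    (hℓ01 : ∀ p y', ℓ p y' ∈ Set.Icc (0 : ℝ) 1)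
    -- the subtask label set
    (A : Set 𝒴) (hA : MeasurableSet A) (hPA : 0 < PZ (Prod.snd ⁻¹' A)) :
    ENNReal.ofReal
        |∫ y, (∫ ω, (1 / ((n : ℝ) * (PZ (Prod.snd ⁻¹' {y})).toReal)) *
            ∑ i, ((if (testSel (Z ω i) (U ω i)).2 = y then
                    ℓ (f (W ω) (testSel (Z ω i) (U ω i)).1) (testSel (Z ω i) (U ω i)).2 else 0) -
                  (if (trainSel (Z ω i) (U ω i)).2 = y then
                    ℓ (f (W ω) (trainSel (Z ω i) (U ω i)).1) (trainSel (Z ω i) (U ω i)).2 else 0))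
            ∂μ)
          ∂((PZ.map Prod.snd)[|A])|
      ≤ ∫⁻ y, (∫⁻ z, ENNReal.ofReal (1 / ((n : ℝ) * (PZ (Prod.snd ⁻¹' {y})).toReal)) *
            ∑ i, (2 * max (if (z i).1.2 = y then (1 : ℝ≥0∞) else 0)
                          (if (z i).2.2 = y then (1 : ℝ≥0∞) else 0) *
                  dCMI μ (fun ω => (f (W ω) ((Z ω i).1.1), f (W ω) ((Z ω i).2.1)))
                    (fun ω => U ω i) Z z) ^ (1 / 2 : ℝ)
            ∂(μ.map Z))
          ∂((PZ.map Prod.snd)[|A]) := by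
  have hZU : HasLaw (fun ω => (Z ω, U ω)) _ μ := ⟨by fun_prop, hlaw⟩
  exact subtask_fCMI_bound_general hZ.aemeasurable (hasLaw_apply_of_hasLaw_prod_pi hZU)
    (indepFun_apply_of_hasLaw_prod_pi hZU) hW.aemeasurable hf hℓ hℓ01 _ fun y => by positivity
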